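/- arXiv:1707.05875 — 6 statements merged into one kernel-verified Lean document; each statement's English description precedes it below -/
import Mathlib

section
/- Let f be a regular probability density on an interval [l,h] with 0 < l ≤ h < ∞, with CDF F(t) = ∫_{t'≤t} f(t') dt' and virtual value φ(t) = t − (1−F(t))/f(t). Then ∫_l^h [t·f(t) − (1 − F(t))]_+ dt ≤ sup_{r≥0} r·(1 − F(r)), i.e. the integral of the positive part of f·φ is at most the optimal posted-price (monopoly) revenue. -/
open MeasureTheory Set

theorem setIntegral_Iic_eq_add_intervalIntegral {f : ℝ → ℝ} (hf : Integrable f) :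
    (fun t => ∫ t' in Iic t, f t') =
      fun t => (∫ t' in Iic (0 : ℝ), f t') + ∫ t' in (0 : ℝ)..t, f t' := by
  funext t
  linarith [intervalIntegral.integral_Iic_sub_Iic (a := 0) (b := t) hf.integrableOn
    hf.integrableOn]

theorem continuous_setIntegral_Iic {f : ℝ → ℝ} (hf : Integrable f) :
    Continuous fun t => ∫ t' in Iic t, f t' := by
  rw [setIntegral_Iic_eq_add_intervalIntegral hf]
  exact continuous_const.add
    (intervalIntegral.continuous_primitive (fun _ _ => hf.intervalIntegrable) 0)

theorem hasDerivAt_setIntegral_Iic {f : ℝ → ℝ} (hf : Integrable f) {t : ℝ}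
    (ht : ContinuousAt f t) : HasDerivAt (fun t => ∫ t' in Iic t, f t') (f t) t := by
  rw [setIntegral_Iic_eq_add_intervalIntegral hf]
  exact (intervalIntegral.integral_hasDerivAt_right hf.intervalIntegrable
    hf.aestronglyMeasurable.stronglyMeasurableAtFilter ht).const_add _

/-- For a regular probability density `f` supported on `[l,h]` with `0 < l ≤ h < ∞`,
with CDF `F t = ∫_{t'≤t} f t'` and virtual value `φ t = t − (1 − F t)/f t`,
the integral of the positive part of `f·φ` is at most the monopoly revenue:
`∫_l^h [t·f t − (1 − F t)]₊ dt ≤ sup_{r ≥ 0} r·(1 − F r)`. -/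
theorem integral_pos_part_virtual_le_monopoly_rev
    (f : ℝ → ℝ) (l h : ℝ) (hl : 0 < l) (hlh : l ≤ h)
    (hf_nonneg : ∀ t, 0 ≤ f t)
    (hf_supp : Function.support f = Icc l h)
    (hf_cont : ContinuousOn f (Icc l h))
    (hf_pos : ∀ t ∈ Icc l h, 0 < f t)
    (hf_prob : ∫ t, f t = 1)
    (hf_reg : MonotoneOn (fun t => t - (1 - ∫ t' in Iic t, f t') / f t) (Icc l h)) :
    ∫ t in Icc l h, max (t * f t - (1 - ∫ t' in Iic t, f t')) 0 ≤
      sSup {y : ℝ | ∃ r : ℝ, 0 ≤ r ∧ y = r * (1 - ∫ t' in Iic r, f t')} := by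
  have hint : Integrable f := by
    by_contra hn
    rw [integral_undef hn] at hf_prob
    exact zero_ne_one hf_prob
  set F : ℝ → ℝ := fun t => ∫ t' in Iic t, f t' with hF
  have hFcont : Continuous F := continuous_setIntegral_Iic hint
  have hF0 (t : ℝ) : 0 ≤ F t := integral_nonneg hf_nonneg
  have hFh (t : ℝ) (ht : h ≤ t) : F t = 1 := by
    rw [← hf_prob]
    refine setIntegral_eq_integral_of_forall_compl_eq_zero fun x hx => ?_
    refine Function.notMem_support.1 fun hxs => hx ?_
    rw [hf_supp] at hxs
    exact hxs.2.trans ht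
  change ∫ t in Icc l h, max (t * f t - (1 - F t)) 0 ≤
    sSup {y : ℝ | ∃ r : ℝ, 0 ≤ r ∧ y = r * (1 - F r)}
  have hGcont : ContinuousOn (fun t => t * f t - (1 - F t)) (Icc l h) :=
    (continuousOn_id.mul hf_cont).sub (continuousOn_const.sub hFcont.continuousOn)
  have hG_iff (t : ℝ) (ht : t ∈ Icc l h) :
      0 ≤ t * f t - (1 - F t) ↔ 0 ≤ t - (1 - F t) / f t := by
    rw [sub_nonneg, sub_nonneg, div_le_iff₀ (hf_pos t ht)]
  -- The least point `r` at which the virtual value is nonnegative is the monopoly price.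
  obtain ⟨r, ⟨hr, hGr⟩, hr_least⟩ :
      ∃ r, IsLeast (Icc l h ∩ (fun t => t * f t - (1 - F t)) ⁻¹' Ici 0) r := by
    refine IsCompact.exists_isLeast
      (isCompact_Icc.of_isClosed_subset
        (hGcont.preimage_isClosed_of_isClosed isClosed_Icc isClosed_Ici) inter_subset_left)
      ⟨h, ⟨hlh, le_rfl⟩, ?_⟩
    have := mul_nonneg (hl.le.trans hlh) (hf_nonneg h)
    simpa [hFh h le_rfl] using this
  have hmax_int : IntegrableOn (fun t => max (t * f t - (1 - F t)) 0) (Icc l h) :=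
    (hGcont.sup continuousOn_const).integrableOn_Icc
  have hsplit : Icc l h = Ico l r ∪ Icc r h := (Ico_union_Icc_eq_Icc hr.1 hr.2).symm
  have hbelow : ∫ t in Ico l r, max (t * f t - (1 - F t)) 0 = 0 := by
    refine setIntegral_eq_zero_of_forall_eq_zero fun t ht => max_eq_right ?_
    by_contra! hpos
    exact ht.2.not_ge (hr_least ⟨⟨ht.1, ht.2.le.trans hr.2⟩, hpos.le⟩)
  have habove : ∫ t in Icc r h, max (t * f t - (1 - F t)) 0 =
      ∫ t in Icc r h, (t * f t - (1 - F t)) := by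
    refine setIntegral_congr_fun measurableSet_Icc fun t ht => max_eq_left ?_
    have htI : t ∈ Icc l h := ⟨hr.1.trans ht.1, ht.2⟩
    exact (hG_iff t htI).2 (((hG_iff r hr).1 hGr).trans (hf_reg hr htI ht.1))
  have hftc : ∫ t in r..h, (t * f t - (1 - F t)) = r * (1 - F r) := by
    have := intervalIntegral.integral_eq_sub_of_hasDerivAt_of_le hr.2
      (f := fun t => -(t * (1 - F t))) (f' := fun t => t * f t - (1 - F t))
      (by fun_prop) (fun t ht => ?_) ?_
    · rw [this, hFh h le_rfl]
      ring
    · have hft : ContinuousAt f t :=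
        hf_cont.continuousAt (Icc_mem_nhds (hr.1.trans_lt ht.1) ht.2)
      have hd := ((hasDerivAt_id t).mul
        ((hasDerivAt_setIntegral_Iic hint hft).const_sub 1)).neg
      refine hd.congr_deriv ?_
      simp only [id, hF]
      ring
    · refine ContinuousOn.intervalIntegrable ?_
      rw [uIcc_of_le hr.2]
      exact hGcont.mono (Icc_subset_Icc_left hr.1)
  have hbdd : BddAbove {y : ℝ | ∃ r : ℝ, 0 ≤ r ∧ y = r * (1 - F r)} := by
    refine ⟨h, ?_⟩
    rintro y ⟨s, hs, rfl⟩
    rcases le_total s h with hsh | hsh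
    · exact (mul_le_of_le_one_right hs (by linarith [hF0 s])).trans hsh
    · rw [hFh s hsh]
      linarith
  refine le_csSup hbdd ⟨r, hl.le.trans hr.1, ?_⟩
  rw [hsplit, setIntegral_union ?_ measurableSet_Icc
    (hmax_int.mono_set (hsplit ▸ subset_union_left))
    (hmax_int.mono_set (hsplit ▸ subset_union_right)), hbelow, habove, zero_add,
    integral_Icc_eq_integral_Ioc, ← intervalIntegral.integral_of_le hr.2, hftc]
  exact disjoint_left.2 fun t ht ht' => ht.2.not_ge ht'.1
end

section
/- Let f be a regular probability density on an interval [l,h] with 0 < l ≤ h < ∞, and define ψ(t) := 2∫_{t'≥t} f(t')/t' dt' − (1/t)·∫_{t'≥t} f(t') dt' for t > 0. Then ∫_l^h [t·ψ(t)]_+ dt ≤ sup_{r≥0} r·(1 − F(r)), i.e. the integral of the positive part of t·ψ(t) is at most the monopoly revenue. -/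
open MeasureTheory Set

/-- The derivative of `2 G t - S t / t` when `S` and `G` are the tail integrals of `f` and of
`t ↦ f t / t`. -/
theorem hasDerivAt_two_mul_sub_inv_mul {f S G : ℝ → ℝ} {t : ℝ} (ht : 0 < t)
    (hS : HasDerivAt S (-f t) t) (hG : HasDerivAt G (-(f t / t)) t) :
    HasDerivAt (fun t => 2 * G t - 1 / t * S t) ((S t - t * f t) / t ^ 2) t := by
  have hinv : HasDerivAt (fun t : ℝ => 1 / t) (-(t ^ 2)⁻¹) t := by
    simpa only [one_div] using hasDerivAt_inv ht.ne'
  refine ((hG.const_mul 2).sub (hinv.mul hS)).congr_deriv ?_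
  field_simp
  ring

/-- If the virtual value `t - S t / f t` is monotone, then `2 G t - S t / t` stays nonnegative
once it has been positive. -/
theorem two_mul_sub_inv_mul_nonneg_of_pos {f S G : ℝ → ℝ} {l h : ℝ} (hl : 0 < l)
    (hS : ∀ t ∈ Icc l h, HasDerivAt S (-f t) t)
    (hG : ∀ t ∈ Icc l h, HasDerivAt G (-(f t / t)) t)
    (hSh : S h = 0) (hGh : G h = 0) (hf : ∀ t ∈ Icc l h, 0 < f t)
    (hreg : MonotoneOn (fun t => t - S t / f t) (Icc l h))
    {t s : ℝ} (ht : t ∈ Icc l h) (hs : s ∈ Icc l h) (hts : t ≤ s)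
    (hpos : 0 < 2 * G t - 1 / t * S t) : 0 ≤ 2 * G s - 1 / s * S s := by
  have hder : ∀ u ∈ Icc l h, HasDerivAt (fun t => 2 * G t - 1 / t * S t)
      ((S u - u * f u) / u ^ 2) u := fun u hu =>
    hasDerivAt_two_mul_sub_inv_mul (hl.trans_le hu.1) (hS u hu) (hG u hu)
  have hmarg : ∀ u ∈ Icc l h, S u - u * f u = -(f u * (u - S u / f u)) := fun u hu => by
    have := (hf u hu).ne'
    field_simp
    ring
  rcases le_total (s - S s / f s) 0 with hφ | hφ
  · have hsub : Icc t s ⊆ Icc l h := Icc_subset_Icc ht.1 hs.2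
    have hmono : MonotoneOn (fun t => 2 * G t - 1 / t * S t) (Icc t s) := by
      refine monotoneOn_of_deriv_nonneg (convex_Icc t s)
        (fun u hu => (hder u (hsub hu)).continuousAt.continuousWithinAt)
        (fun u hu => (hder u (hsub (interior_subset hu))).differentiableAt.differentiableWithinAt)
        fun u hu => ?_
      have hu' := interior_subset hu
      rw [(hder u (hsub hu')).deriv, hmarg u (hsub hu')]
      have h1 : u - S u / f u ≤ 0 := (hreg (hsub hu') hs hu'.2).trans hφ
      have h2 := mul_nonpos_of_nonneg_of_nonpos (hf u (hsub hu')).le h1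
      exact div_nonneg (by linarith) (sq_nonneg u)
    exact hpos.le.trans (hmono (left_mem_Icc.2 hts) (right_mem_Icc.2 hts) hts)
  · have hsub : Icc s h ⊆ Icc l h := Icc_subset_Icc_left hs.1
    have hanti : AntitoneOn (fun t => 2 * G t - 1 / t * S t) (Icc s h) := by
      refine antitoneOn_of_deriv_nonpos (convex_Icc s h)
        (fun u hu => (hder u (hsub hu)).continuousAt.continuousWithinAt)
        (fun u hu => (hder u (hsub (interior_subset hu))).differentiableAt.differentiableWithinAt)
        fun u hu => ?_
      have hu' := interior_subset hu
      rw [(hder u (hsub hu')).deriv, hmarg u (hsub hu')]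
      have h1 : 0 ≤ u - S u / f u := hφ.trans (hreg hs (hsub hu') hu'.1)
      have h2 := mul_nonneg (hf u (hsub hu')).le h1
      exact div_nonpos_of_nonpos_of_nonneg (by linarith) (sq_nonneg u)
    simpa [hSh, hGh] using hanti (left_mem_Icc.2 hs.2) (right_mem_Icc.2 hs.2) hs.2

/-- The integral of the positive part is at most half the revenue at the price where
`2 G t - S t / t` changes sign. -/
theorem exists_integral_pos_part_le_half_rev {f S G : ℝ → ℝ} {l h : ℝ} (hl : 0 < l) (hlh : l ≤ h)
    (hS : ∀ t ∈ Icc l h, HasDerivAt S (-f t) t)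
    (hG : ∀ t ∈ Icc l h, HasDerivAt G (-(f t / t)) t)
    (hSh : S h = 0) (hGh : G h = 0) (hf : ∀ t ∈ Icc l h, 0 < f t)
    (hS0 : ∀ t ∈ Icc l h, 0 ≤ S t)
    (hreg : MonotoneOn (fun t => t - S t / f t) (Icc l h)) :
    ∃ a ∈ Icc l h, ∫ t in l..h, max (t * (2 * G t - 1 / t * S t)) 0 ≤ a * S a / 2 := by
  set Ψ : ℝ → ℝ := fun t => 2 * G t - 1 / t * S t with hΨ
  have hder : ∀ u ∈ Icc l h, HasDerivAt Ψ ((S u - u * f u) / u ^ 2) u := fun u hu =>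
    hasDerivAt_two_mul_sub_inv_mul (hl.trans_le hu.1) (hS u hu) (hG u hu)
  have hcont : ContinuousOn Ψ (Icc l h) := fun u hu =>
    (hder u hu).continuousAt.continuousWithinAt
  change ∃ a ∈ Icc l h, ∫ t in l..h, max (t * Ψ t) 0 ≤ a * S a / 2
  set A : Set ℝ := {t ∈ Icc l h | 0 < Ψ t}
  rcases A.eq_empty_or_nonempty with hempty | hne
  · refine ⟨l, left_mem_Icc.2 hlh, ?_⟩
    have hzero : ∫ t in l..h, max (t * Ψ t) 0 = ∫ t in l..h, (0 : ℝ) := by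
      refine intervalIntegral.integral_congr fun t ht => ?_
      rw [uIcc_of_le hlh] at ht
      have : Ψ t ≤ 0 := not_lt.1 fun hp => hempty.subset ⟨ht, hp⟩
      exact max_eq_right (mul_nonpos_of_nonneg_of_nonpos (hl.le.trans ht.1) this)
    rw [hzero, intervalIntegral.integral_zero]
    have := mul_nonneg hl.le (hS0 l (left_mem_Icc.2 hlh))
    linarith
  · have hbdd : BddBelow A := ⟨l, fun t ht => ht.1.1⟩
    have hclosed : IsClosed (Icc l h ∩ Ψ ⁻¹' Ici 0) :=
      hcont.preimage_isClosed_of_isClosed isClosed_Icc isClosed_Ici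
    have hsubset : A ⊆ Icc l h ∩ Ψ ⁻¹' Ici 0 := fun t ht => ⟨ht.1, ht.2.le⟩
    obtain ⟨haI, hΨa⟩ : sInf A ∈ Icc l h ∩ Ψ ⁻¹' Ici 0 :=
      closure_minimal hsubset hclosed (csInf_mem_closure hne hbdd)
    have hleft : ∀ t ∈ Icc l h, t < sInf A → Ψ t ≤ 0 := fun t ht hlt =>
      not_lt.1 fun hp => (csInf_le hbdd ⟨ht, hp⟩).not_gt hlt
    have hright : ∀ t ∈ Icc l h, sInf A < t → 0 ≤ Ψ t := fun t ht hlt => by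
      obtain ⟨u, hu, hut⟩ := exists_lt_of_csInf_lt hne hlt
      exact two_mul_sub_inv_mul_nonneg_of_pos hl hS hG hSh hGh hf hreg hu.1 ht hut.le hu.2
    set a := sInf A
    refine ⟨a, haI, ?_⟩
    have hcmax : ContinuousOn (fun t => max (t * Ψ t) 0) (Icc l h) :=
      ContinuousOn.sup (continuousOn_id.mul hcont) continuousOn_const
    have hsub1 : Icc l a ⊆ Icc l h := Icc_subset_Icc_right haI.2
    have hsub2 : Icc a h ⊆ Icc l h := Icc_subset_Icc_left haI.1
    rw [← intervalIntegral.integral_add_adjacent_intervals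
      ((hcmax.mono hsub1).intervalIntegrable_of_Icc haI.1)
      ((hcmax.mono hsub2).intervalIntegrable_of_Icc haI.2)]
    have hI1 : ∫ t in l..a, max (t * Ψ t) 0 ≤ 0 := by
      rw [intervalIntegral.integral_of_le haI.1, integral_Ioc_eq_integral_Ioo]
      refine setIntegral_nonpos measurableSet_Ioo fun t ht => ?_
      have htI := hsub1 (Ioo_subset_Icc_self ht)
      exact (max_eq_right (mul_nonpos_of_nonneg_of_nonpos (hl.le.trans htI.1)
        (hleft t htI ht.2))).le
    have hI2 : ∫ t in a..h, max (t * Ψ t) 0 = ∫ t in a..h, t * Ψ t := by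
      rw [intervalIntegral.integral_of_le haI.2, intervalIntegral.integral_of_le haI.2]
      refine setIntegral_congr_fun measurableSet_Ioc fun t ht => ?_
      have htI := hsub2 (Ioc_subset_Icc_self ht)
      exact max_eq_left (mul_nonneg (hl.le.trans htI.1) (hright t htI ht.1))
    have hprim : ∀ t ∈ uIcc a h,
        HasDerivAt (fun t => (t ^ 2 * Ψ t - t * S t) / 2) (t * Ψ t) t := fun t ht => by
      rw [uIcc_of_le haI.2] at ht
      have htI := hsub2 ht
      have ht0 : t ≠ 0 := (hl.trans_le htI.1).ne'
      refine ((((hasDerivAt_pow 2 t).mul (hder t htI)).sub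
        ((hasDerivAt_id t).mul (hS t htI))).div_const 2).congr_deriv ?_
      simp only [id]
      field_simp
      push_cast
      ring
    have hint : IntervalIntegrable (fun t => t * Ψ t) volume a h :=
      ((continuousOn_id.mul hcont).mono hsub2).intervalIntegrable_of_Icc haI.2
    have hFTC := intervalIntegral.integral_eq_sub_of_hasDerivAt hprim hint
    have hΨh : Ψ h = 0 := by simp [hΨ, hSh, hGh]
    rw [hSh, hΨh] at hFTC
    have hnn : 0 ≤ a ^ 2 * Ψ a := mul_nonneg (sq_nonneg a) hΨa
    rw [hI2, hFTC]
    linarith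

/-- The tail integral over `Ici t` of a function vanishing beyond `h` is an interval integral of
any function agreeing with it on `Icc t h`. -/
theorem setIntegral_Ici_eq_intervalIntegral {u v : ℝ → ℝ} {t h : ℝ} (hth : t ≤ h)
    (hu : ∀ s, h < s → u s = 0) (huv : ∀ s ∈ Icc t h, u s = v s) :
    ∫ s in Ici t, u s = ∫ s in t..h, v s := by
  rw [intervalIntegral.integral_of_le hth, ← integral_Icc_eq_integral_Ioc,
    ← setIntegral_congr_fun measurableSet_Icc huv]
  refine setIntegral_eq_of_subset_of_forall_sdiff_eq_zero measurableSet_Ici Icc_subset_Ici_self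
    fun s hs => hu s ?_
  exact not_le.1 fun hsh => hs.2 ⟨hs.1, hsh⟩

/-- For a regular probability density `f` supported on `[l,h]` with `0 < l ≤ h < ∞`,
defining `ψ t = 2∫_{t'≥t} f t'/t' dt' − (1/t)·∫_{t'≥t} f t' dt'`, the integral of the
positive part of `t·ψ t` is at most the monopoly revenue `sup_{r ≥ 0} r·(1 − F r)`. -/
theorem integral_pos_part_t_psi_le_monopoly_rev
    (f : ℝ → ℝ) (l h : ℝ) (hl : 0 < l) (hlh : l ≤ h)
    (hf_nonneg : ∀ t, 0 ≤ f t)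
    (hf_supp : Function.support f = Icc l h)
    (hf_cont : ContinuousOn f (Icc l h))
    (hf_pos : ∀ t ∈ Icc l h, 0 < f t)
    (hf_prob : ∫ t, f t = 1)
    (hf_reg : MonotoneOn (fun t => t - (1 - ∫ t' in Iic t, f t') / f t) (Icc l h))
    (ψ : ℝ → ℝ)
    (hψ : ∀ t : ℝ, 0 < t →
      ψ t = 2 * (∫ t' in Ici t, f t' / t') - (1 / t) * ∫ t' in Ici t, f t') :
    ∫ t in Icc l h, max (t * ψ t) 0 ≤
      sSup {y : ℝ | ∃ r : ℝ, 0 ≤ r ∧ y = r * (1 - ∫ t' in Iic r, f t')} := by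
  have hint : Integrable f := by
    by_contra hn
    rw [integral_undef hn] at hf_prob
    exact zero_ne_one hf_prob
  have htail : ∀ t, 1 - ∫ t' in Iic t, f t' = ∫ t' in Ici t, f t' := fun t => by
    have := integral_add_compl (measurableSet_Iic (a := t)) hint
    rw [compl_Iic, hf_prob, ← integral_Ici_eq_integral_Ioi] at this
    linarith
  have hzero : ∀ s, h < s → f s = 0 := fun s hs =>
    Function.notMem_support.1 fun hmem => (hf_supp ▸ hmem : s ∈ Icc l h).2.not_gt hs
  -- a continuous positive function on the line agreeing with `f` on `[l, h]`
  set g : ℝ → ℝ := IccExtend hlh ((Icc l h).domRestrict f) with hg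
  have hgc : Continuous g := (continuousOn_iff_continuous_domRestrict.1 hf_cont).Icc_extend'
  have hgf : ∀ s ∈ Icc l h, g s = f s := fun s hs => by
    rw [hg, IccExtend_of_mem hlh _ hs, domRestrict_apply]
  have hqc : Continuous fun s => g s / max s l :=
    hgc.div (continuous_id.max continuous_const) fun s => (hl.trans_le (le_max_right s l)).ne'
  have hSeq : ∀ t ∈ Icc l h, ∫ s in Ici t, f s = ∫ s in t..h, g s := fun t ht =>
    setIntegral_Ici_eq_intervalIntegral ht.2 hzero fun s hs =>
      (hgf s ⟨ht.1.trans hs.1, hs.2⟩).symm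
  have hGeq : ∀ t ∈ Icc l h, ∫ s in Ici t, f s / s = ∫ s in t..h, g s / max s l := fun t ht =>
    setIntegral_Ici_eq_intervalIntegral ht.2 (fun s hs => by rw [hzero s hs, zero_div])
      fun s hs => by rw [hgf s ⟨ht.1.trans hs.1, hs.2⟩, max_eq_left (ht.1.trans hs.1)]
  obtain ⟨a, ha, hle⟩ := exists_integral_pos_part_le_half_rev (f := f)
    (S := fun t => ∫ s in t..h, g s) (G := fun t => ∫ s in t..h, g s / max s l) hl hlh
    (fun t ht => by
      rw [← hgf t ht]
      exact intervalIntegral.integral_hasDerivAt_left (hgc.intervalIntegrable _ _)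
        (hgc.stronglyMeasurableAtFilter _ _) hgc.continuousAt)
    (fun t ht => by
      have := intervalIntegral.integral_hasDerivAt_left (hqc.intervalIntegrable t h)
        (hqc.stronglyMeasurableAtFilter _ _) hqc.continuousAt
      rwa [hgf t ht, max_eq_left ht.1] at this)
    intervalIntegral.integral_same intervalIntegral.integral_same hf_pos
    (fun t ht => by
      rw [← hSeq t ht]
      exact integral_nonneg hf_nonneg)
    (hf_reg.congr fun t ht => by simp only [htail, hSeq t ht])
  have hlhs : ∫ t in Icc l h, max (t * ψ t) 0 ≤ a * (∫ s in a..h, g s) / 2 := by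
    refine le_trans (le_of_eq ?_) hle
    rw [intervalIntegral.integral_of_le hlh, ← integral_Icc_eq_integral_Ioc]
    refine setIntegral_congr_fun measurableSet_Icc fun t ht => ?_
    simp only [hψ t (hl.trans_le ht.1), hSeq t ht, hGeq t ht]
  have hrev : 0 ≤ a * ∫ s in a..h, g s := by
    rw [← hSeq a ha]
    exact mul_nonneg (hl.le.trans ha.1) (integral_nonneg hf_nonneg)
  have hbdd : BddAbove {y : ℝ | ∃ r : ℝ, 0 ≤ r ∧ y = r * (1 - ∫ t' in Iic r, f t')} := by
    refine ⟨h, ?_⟩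
    rintro y ⟨r, hr, rfl⟩
    rcases le_or_gt r h with hrh | hrh
    · have hF : 0 ≤ ∫ t' in Iic r, f t' := integral_nonneg hf_nonneg
      nlinarith
    · have hvanish : ∫ t' in Ici r, f t' = 0 :=
        setIntegral_eq_zero_of_forall_eq_zero fun s hs => hzero s (hrh.trans_le hs)
      rw [htail, hvanish, mul_zero]
      exact hl.le.trans hlh
  have hmem : a * (∫ s in a..h, g s) ≤
      sSup {y : ℝ | ∃ r : ℝ, 0 ≤ r ∧ y = r * (1 - ∫ t' in Iic r, f t')} :=
    le_csSup hbdd ⟨a, hl.le.trans ha.1, by rw [htail, hSeq a ha]⟩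
  linarith
end

section
/- Let f be a regular probability density on [l,h] with 0 < l ≤ h < ∞, and define ψ(t) := 2∫_{t'≥t} f(t')/t' dt' − (1/t)·∫_{t'≥t} f(t') dt'. Then the set {t ∈ [l,h] : ψ(t) ≥ 0} is order-convex (an interval): whenever l ≤ t₁ ≤ t₂ ≤ t₃ ≤ h with ψ(t₁) ≥ 0 and ψ(t₃) ≥ 0, also ψ(t₂) ≥ 0. -/
open MeasureTheory Set

/-- The tail integral of a function vanishing outside `[l, h]` is an interval integral up to `h`. -/
lemma setIntegral_Ici_eq_intervalIntegral_s6 {g : ℝ → ℝ} {l h t : ℝ}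
    (hg : ∀ x ∉ Icc l h, g x = 0) (hth : t ≤ h) :
    ∫ x in Ici t, g x = ∫ x in t..h, g x := by
  rw [intervalIntegral.integral_of_le hth, ← integral_Icc_eq_integral_Ioc]
  exact setIntegral_eq_of_subset_of_forall_sdiff_eq_zero measurableSet_Ici
    Icc_subset_Ici_self fun x hx => hg x fun hmem => hx.2 ⟨hx.1, hmem.2⟩

/-- The tail integral of a function continuous on `[l, h]` is continuous there. -/
lemma continuousOn_tail_intervalIntegral {g : ℝ → ℝ} {l h : ℝ} (hlh : l ≤ h)
    (hg : ContinuousOn g (Icc l h)) :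
    ContinuousOn (fun t => ∫ x in t..h, g x) (Icc l h) := by
  have := intervalIntegral.continuousOn_primitive_interval_left (μ := volume) (f := g)
    (a := l) (b := h) (by rw [uIcc_of_le hlh]; exact hg.integrableOn_Icc)
  rwa [uIcc_of_le hlh] at this

/-- The derivative of the tail integral of a function continuous on `[l, h]`. -/
lemma hasDerivAt_tail_intervalIntegral {g : ℝ → ℝ} {l h t : ℝ}
    (hg : ContinuousOn g (Icc l h)) (ht : t ∈ Ioo l h) :
    HasDerivAt (fun t => ∫ x in t..h, g x) (-g t) t := by
  refine intervalIntegral.integral_hasDerivAt_left ?_ ?_ ?_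
  · refine ContinuousOn.intervalIntegrable (hg.mono ?_)
    rw [uIcc_of_le ht.2.le]
    exact Icc_subset_Icc_left ht.1.le
  · exact (hg.mono Ioo_subset_Icc_self).stronglyMeasurableAtFilter isOpen_Ioo t ht
  · exact hg.continuousAt (Icc_mem_nhds ht.1 ht.2)

/-- For a regular probability density `f` on `[l,h]` with `0 < l ≤ h < ∞`, the set
`{t ∈ [l,h] : ψ t ≥ 0}` is order-convex, where
`ψ t = 2∫_{t'≥t} f t'/t' dt' − (1/t)·∫_{t'≥t} f t' dt'`: whenever
`l ≤ t₁ ≤ t₂ ≤ t₃ ≤ h` with `ψ t₁ ≥ 0` and `ψ t₃ ≥ 0`, also `ψ t₂ ≥ 0`. -/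
theorem psi_nonneg_order_convex
    (f : ℝ → ℝ) (l h : ℝ) (hl : 0 < l) (hlh : l ≤ h)
    (hf_nonneg : ∀ t, 0 ≤ f t)
    (hf_supp : Function.support f = Icc l h)
    (hf_cont : ContinuousOn f (Icc l h))
    (hf_pos : ∀ t ∈ Icc l h, 0 < f t)
    (hf_prob : ∫ t, f t = 1)
    (hf_reg : MonotoneOn (fun t => t - (1 - ∫ t' in Iic t, f t') / f t) (Icc l h))
    (ψ : ℝ → ℝ)
    (hψ : ∀ t : ℝ, 0 < t →
      ψ t = 2 * (∫ t' in Ici t, f t' / t') - (1 / t) * ∫ t' in Ici t, f t') :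
    ∀ t₁ t₂ t₃ : ℝ, l ≤ t₁ → t₁ ≤ t₂ → t₂ ≤ t₃ → t₃ ≤ h →
      0 ≤ ψ t₁ → 0 ≤ ψ t₃ → 0 ≤ ψ t₂ := by
  have hf_zero : ∀ x ∉ Icc l h, f x = 0 := fun x hx => by
    rwa [← hf_supp, Function.notMem_support] at hx
  have hf_int : Integrable f := .of_integral_ne_zero (by rw [hf_prob]; exact one_ne_zero)
  have hq_cont : ContinuousOn (fun x => f x / x) (Icc l h) :=
    hf_cont.div continuousOn_id fun x hx => (hl.trans_le hx.1).ne'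
  have htail : ∀ t ≤ h, 1 - ∫ x in Iic t, f x = ∫ x in t..h, f x := fun t ht => by
    rw [← setIntegral_Ici_eq_intervalIntegral_s6 hf_zero ht, integral_Ici_eq_integral_Ioi, ← hf_prob,
      ← intervalIntegral.integral_Iic_add_Ioi hf_int.integrableOn hf_int.integrableOn (b := t),
      add_sub_cancel_left]
  have hψ_eq : EqOn ψ (fun t => 2 * (∫ x in t..h, f x / x) - (1 / t) * ∫ x in t..h, f x)
      (Icc l h) := fun t ht => by
    rw [hψ t (hl.trans_le ht.1), setIntegral_Ici_eq_intervalIntegral_s6 hf_zero ht.2,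
      setIntegral_Ici_eq_intervalIntegral_s6 (l := l) (fun x hx => by rw [hf_zero x hx, zero_div]) ht.2]
  have hψ_cont : ContinuousOn ψ (Icc l h) := by
    refine ContinuousOn.congr ?_ hψ_eq
    exact (continuousOn_const.mul (continuousOn_tail_intervalIntegral hlh hq_cont)).sub
      ((continuousOn_const.div continuousOn_id fun x hx => (hl.trans_le hx.1).ne').mul
        (continuousOn_tail_intervalIntegral hlh hf_cont))
  -- The derivative of `ψ` has the sign opposite to that of the virtual value.
  have hψ_deriv : ∀ t ∈ Ioo l h, HasDerivAt ψ
      (-(f t / t ^ 2 * (t - (1 - ∫ x in Iic t, f x) / f t))) t := fun t ht => by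
    have ht0 : t ≠ 0 := (hl.trans ht.1).ne'
    have hft : f t ≠ 0 := (hf_pos t (Ioo_subset_Icc_self ht)).ne'
    have hd := ((hasDerivAt_tail_intervalIntegral hq_cont ht).const_mul 2).sub
      ((hasDerivAt_inv ht0).mul (hasDerivAt_tail_intervalIntegral hf_cont ht))
    refine (hd.congr_of_eventuallyEq ?_).congr_deriv ?_
    · filter_upwards [Icc_mem_nhds ht.1 ht.2] with x hx
      simp [hψ_eq hx]
    · rw [htail t ht.2.le]
      field_simp
      ring
  intro t₁ t₂ t₃ h1 h12 h23 h3 hp1 hp3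
  have ht2 : t₂ ∈ Icc l h := ⟨h1.trans h12, h23.trans h3⟩
  have hweight : ∀ t, 0 ≤ f t / t ^ 2 := fun t => div_nonneg (hf_nonneg t) (sq_nonneg t)
  rcases le_total (t₂ - (1 - ∫ x in Iic t₂, f x) / f t₂) 0 with hφ | hφ
  · have hmono : MonotoneOn ψ (Icc t₁ t₂) := by
      refine monotoneOn_of_hasDerivWithinAt_nonneg (convex_Icc _ _)
        (hψ_cont.mono (Icc_subset_Icc h1 ht2.2))
        (fun x hx => (hψ_deriv x ?_).hasDerivWithinAt) fun x hx => ?_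
      all_goals rw [interior_Icc] at hx
      · exact ⟨h1.trans_lt hx.1, hx.2.trans_le ht2.2⟩
      · exact neg_nonneg.2 (mul_nonpos_of_nonneg_of_nonpos (hweight x)
          ((hf_reg ⟨h1.trans hx.1.le, hx.2.le.trans ht2.2⟩ ht2 hx.2.le).trans hφ))
    exact hp1.trans (hmono (left_mem_Icc.2 h12) (right_mem_Icc.2 h12) h12)
  · have hanti : AntitoneOn ψ (Icc t₂ t₃) := by
      refine antitoneOn_of_hasDerivWithinAt_nonpos (convex_Icc _ _)
        (hψ_cont.mono (Icc_subset_Icc ht2.1 h3))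
        (fun x hx => (hψ_deriv x ?_).hasDerivWithinAt) fun x hx => ?_
      all_goals rw [interior_Icc] at hx
      · exact ⟨ht2.1.trans_lt hx.1, hx.2.trans_le h3⟩
      · exact neg_nonpos.2 (mul_nonneg (hweight x)
          (hφ.trans (hf_reg ht2 ⟨ht2.1.trans hx.1.le, hx.2.le.trans h3⟩ hx.1.le)))
    exact hp3.trans (hanti (left_mem_Icc.2 h23) (right_mem_Icc.2 h23) h23)
end

section
/- Let f be a probability density supported on [l,h] with 0 < l ≤ h < ∞, and define ψ(t) := 2∫_{t'≥t} f(t')/t' dt' − (1/t)·∫_{t'≥t} f(t') dt'. Then for every r > 0, ∫_{0 < t ≤ r} t·ψ(t) dt = ∫_{t' > r} ( r²/t' − r )·f(t') dt', and in particular ∫_{0 < t ≤ r} t·ψ(t) dt ≤ 0. -/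
open MeasureTheory Set

/-- The kernel `2t/x - 1` on the region `0 < t ≤ x`, extended by zero. -/
noncomputable def psiKernel (t x : ℝ) : ℝ :=
  if 0 < t ∧ t ≤ x then 2 * t / x - 1 else 0

lemma abs_psiKernel_le_one (t x : ℝ) : |psiKernel t x| ≤ 1 := by
  unfold psiKernel
  split_ifs with hx
  · obtain ⟨h0, h1⟩ := hx
    have hxpos : 0 < x := h0.trans_le h1
    have hle : t / x ≤ 1 := (div_le_one hxpos).2 h1
    have hnonneg : 0 ≤ t / x := by positivity
    rw [mul_div_assoc, abs_le]
    constructor <;> linarith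
  · simp

lemma measurable_psiKernel : Measurable fun p : ℝ × ℝ => psiKernel p.1 p.2 := by
  unfold psiKernel
  refine Measurable.ite ?_ (by fun_prop) measurable_const
  exact (measurableSet_lt measurable_const measurable_fst).inter
    (measurableSet_le measurable_fst measurable_snd)

lemma integral_psiKernel_mul {f : ℝ → ℝ} (hf : Integrable f) {t : ℝ} (ht : 0 < t) :
    ∫ x, psiKernel t x * f x =
      t * (2 * (∫ x in Ici t, f x / x) - (1 / t) * ∫ x in Ici t, f x) := by
  have hdiv : IntegrableOn (fun x => f x / x) (Ici t) := by
    simp only [div_eq_inv_mul]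
    refine hf.integrableOn.bdd_mul (c := t⁻¹) (by fun_prop) ?_
    filter_upwards [ae_restrict_mem measurableSet_Ici] with x hx
    rw [Real.norm_eq_abs, abs_of_nonneg (inv_nonneg.2 (ht.le.trans hx))]
    exact inv_anti₀ ht hx
  have hkernel : (fun x => psiKernel t x * f x) =
      (Ici t).indicator fun x => 2 * t * (f x / x) - f x := by
    ext x
    by_cases hx : t ≤ x
    · simp only [psiKernel, ht, hx, and_self, if_true, mem_Ici, indicator_of_mem]
      ring
    · simp [psiKernel, hx]
  rw [hkernel, integral_indicator measurableSet_Ici,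
    integral_sub (hdiv.const_mul _) hf.integrableOn, integral_const_mul]
  field_simp

lemma setIntegral_psiKernel {r : ℝ} (hr : 0 < r) (x : ℝ) :
    ∫ t in Ioc 0 r, psiKernel t x = (Ioi r).indicator (fun x => r ^ 2 / x - r) x := by
  have hprimitive (m : ℝ) (hm : 0 ≤ m) :
      ∫ t in Ioc 0 m, (2 * t / x - 1) = m ^ 2 / x - m := by
    rw [← intervalIntegral.integral_of_le hm, intervalIntegral.integral_sub
      (Continuous.intervalIntegrable (by fun_prop) _ _) (by simp),
      intervalIntegral.integral_div, intervalIntegral.integral_const_mul, integral_id]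
    simp
    ring
  have hkernel : (fun t => psiKernel t x) = (Ioc 0 x).indicator fun t => 2 * t / x - 1 := by
    ext t
    simp [psiKernel, indicator_apply]
  rw [hkernel, setIntegral_indicator measurableSet_Ioc, Ioc_inter_Ioc, sup_idem]
  rcases lt_or_ge r x with hx | hx
  · rw [inf_eq_left.2 hx.le, hprimitive r hr.le, indicator_of_mem (mem_Ioi.2 hx)]
  · rw [inf_eq_right.2 hx, indicator_of_notMem (notMem_Ioi.2 hx)]
    rcases le_or_gt x 0 with hx0 | hx0
    · simp [Ioc_eq_empty_of_le hx0]
    · rw [hprimitive x hx0.le]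
      field_simp
      ring

lemma integrable_psiKernel_mul {f : ℝ → ℝ} (hf : Integrable f) (r : ℝ) :
    Integrable (Function.uncurry fun t x => psiKernel t x * f x)
      ((volume.restrict (Ioc 0 r)).prod volume) :=
  (hf.comp_snd _).bdd_mul measurable_psiKernel.aestronglyMeasurable
    (Filter.Eventually.of_forall fun p => abs_psiKernel_le_one p.1 p.2)

/-- For a probability density `f` supported on `[l,h]` with `0 < l ≤ h < ∞`, and
`ψ t = 2∫_{t'≥t} f t'/t' dt' − (1/t)·∫_{t'≥t} f t' dt'`, for every `r > 0` one has
`∫_{0<t≤r} t·ψ t dt = ∫_{t'>r} (r²/t' − r)·f t' dt'`, and in particular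
`∫_{0<t≤r} t·ψ t dt ≤ 0`. -/
theorem integral_t_psi_eq_and_nonpos
    (f : ℝ → ℝ) (l h : ℝ) (hl : 0 < l) (hlh : l ≤ h)
    (hf_nonneg : ∀ t, 0 ≤ f t)
    (hf_supp : Function.support f = Icc l h)
    (hf_int : Integrable f)
    (hf_prob : ∫ t, f t = 1)
    (ψ : ℝ → ℝ)
    (hψ : ∀ t : ℝ, 0 < t →
      ψ t = 2 * (∫ t' in Ici t, f t' / t') - (1 / t) * ∫ t' in Ici t, f t') :
    ∀ r : ℝ, 0 < r →
      (∫ t in Ioc (0:ℝ) r, t * ψ t) = (∫ t' in Ioi r, (r ^ 2 / t' - r) * f t') ∧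
      (∫ t in Ioc (0:ℝ) r, t * ψ t) ≤ 0 := by
  intro r hr
  have heq : (∫ t in Ioc (0:ℝ) r, t * ψ t) = ∫ t' in Ioi r, (r ^ 2 / t' - r) * f t' := by
    calc ∫ t in Ioc (0:ℝ) r, t * ψ t
        = ∫ t in Ioc (0:ℝ) r, ∫ x, psiKernel t x * f x :=
          setIntegral_congr_fun measurableSet_Ioc fun t ht => by
            simp only [hψ t ht.1, integral_psiKernel_mul hf_int ht.1]
      _ = ∫ x, ∫ t in Ioc (0:ℝ) r, psiKernel t x * f x :=
          integral_integral_swap (integrable_psiKernel_mul hf_int r)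
      _ = ∫ x, (Ioi r).indicator (fun x => (r ^ 2 / x - r) * f x) x := by
          simp only [integral_mul_const, setIntegral_psiKernel hr, indicator_mul_left]
      _ = ∫ x in Ioi r, (r ^ 2 / x - r) * f x := integral_indicator measurableSet_Ioi
  refine ⟨heq, heq.trans_le (setIntegral_nonpos measurableSet_Ioi fun x hx => ?_)⟩
  refine mul_nonpos_of_nonpos_of_nonneg (sub_nonpos.2 ?_) (hf_nonneg x)
  rw [div_le_iff₀ (hr.trans hx), sq]
  exact mul_le_mul_of_nonneg_left (le_of_lt hx) hr.le
end

section
/- Let f be a probability density supported on [l,h] with 0 < l ≤ h < ∞, with CDF F, and define ψ(t) := 2∫_{t'≥t} f(t')/t' dt' − (1/t)·∫_{t'≥t} f(t') dt'. Then for every r > 0, −∫_{0 < t ≤ r} t·ψ(t) dt ≤ r·(1 − F(r)) ≤ sup_{r'≥0} r'·(1 − F(r')). -/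
open MeasureTheory Set

/-- The truncated kernel `1_{t ≤ s} (2 t f(s)/s - f(s))`, whose integral in `s` is `t ψ(t)`. -/
noncomputable def virtualKernel (f : ℝ → ℝ) : ℝ × ℝ → ℝ :=
  {p : ℝ × ℝ | p.1 ≤ p.2}.indicator fun p => 2 * p.1 * (f p.2 / p.2) - f p.2

lemma integrable_div_self {f : ℝ → ℝ} {l : ℝ} (hl : 0 < l) (hf : Integrable f)
    (hf_zero : ∀ t < l, f t = 0) : Integrable fun t => f t / t := by
  refine (hf.norm.div_const l).mono
    (hf.aestronglyMeasurable.aemeasurable.div aemeasurable_id).aestronglyMeasurable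
    (ae_of_all _ fun t => ?_)
  rcases lt_or_ge t l with ht | ht
  · simp [hf_zero t ht]
  · have ht0 : 0 < t := hl.trans_le ht
    simp only [Real.norm_eq_abs, abs_div, abs_abs, abs_of_pos ht0, abs_of_pos hl]
    gcongr

lemma integrable_virtualKernel {f : ℝ → ℝ} {r : ℝ} (hf : Integrable f)
    (hdiv : Integrable fun t => f t / t) :
    Integrable (virtualKernel f) ((volume.restrict (Ioc 0 r)).prod volume) := by
  have hlin : Integrable (fun t : ℝ => 2 * t) (volume.restrict (Ioc 0 r)) :=
    (Continuous.integrableOn_Icc (by fun_prop)).mono_set Ioc_subset_Icc_self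
  have hone : Integrable (fun _ : ℝ => (1 : ℝ)) (volume.restrict (Ioc 0 r)) :=
    integrable_const 1
  refine Integrable.indicator ?_ (measurableSet_le measurable_fst measurable_snd)
  simpa [Pi.sub_def] using (hlin.mul_prod hdiv).sub (hone.mul_prod hf)

lemma integral_virtualKernel_right {f : ℝ → ℝ} (hf : Integrable f)
    (hdiv : Integrable fun t => f t / t) (t : ℝ) :
    ∫ s, virtualKernel f (t, s) = 2 * t * (∫ s in Ici t, f s / s) - ∫ s in Ici t, f s := by
  have hind : (fun s => virtualKernel f (t, s)) =
      (Ici t).indicator fun s => 2 * t * (f s / s) - f s := by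
    ext s
    simp [virtualKernel, indicator_apply]
  rw [hind, integral_indicator measurableSet_Ici,
    integral_sub (hdiv.integrableOn.const_mul _) hf.integrableOn, integral_const_mul]

lemma integral_virtualKernel_left (f : ℝ → ℝ) {r s : ℝ} (hr : 0 < r) (hs : 0 < s) :
    ∫ t in Ioc 0 r, virtualKernel f (t, s) = min r s ^ 2 * (f s / s) - min r s * f s := by
  have hind : (fun t => virtualKernel f (t, s)) =
      (Iic s).indicator fun t => 2 * t * (f s / s) - f s := by
    ext t
    simp [virtualKernel, indicator_apply]
  rw [hind, setIntegral_indicator measurableSet_Iic, Ioc_inter_Iic,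
    ← intervalIntegral.integral_of_le (le_min hr.le hs.le), intervalIntegral.integral_sub
      (Continuous.intervalIntegrable (by fun_prop) _ _) (by simp),
    intervalIntegral.integral_mul_const, intervalIntegral.integral_const_mul, integral_id,
    intervalIntegral.integral_const]
  simp only [smul_eq_mul]
  ring

lemma neg_integral_virtualKernel_left_le {f : ℝ → ℝ} {r : ℝ} (hr : 0 < r)
    (hf_nonneg : ∀ t, 0 ≤ f t) (hf_zero : ∀ t ≤ 0, f t = 0) (s : ℝ) :
    -(∫ t in Ioc 0 r, virtualKernel f (t, s)) ≤ (Ioi r).indicator (fun s => r * f s) s := by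
  rcases le_or_gt s 0 with hs | hs
  · simp [virtualKernel, indicator_apply, hf_zero s hs]
  rw [integral_virtualKernel_left f hr hs]
  rcases le_or_gt s r with hsr | hsr
  · rw [min_eq_right hsr, indicator_of_notMem (by simpa using hsr)]
    field_simp
    simp
  · rw [min_eq_left hsr.le, indicator_of_mem (by simpa using hsr)]
    have : 0 ≤ r ^ 2 * (f s / s) := mul_nonneg (sq_nonneg r) (div_nonneg (hf_nonneg s) hs.le)
    linarith

lemma one_sub_setIntegral_Iic {f : ℝ → ℝ} (hf : Integrable f) (hf_prob : ∫ t, f t = 1) (r : ℝ) :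
    1 - ∫ t in Iic r, f t = ∫ t in Ioi r, f t := by
  rw [← hf_prob, ← intervalIntegral.integral_Iic_add_Ioi hf.integrableOn hf.integrableOn (b := r),
    add_sub_cancel_left]

lemma mul_setIntegral_Ioi_le {f : ℝ → ℝ} {h r : ℝ} (hh : 0 ≤ h) (hf_nonneg : ∀ t, 0 ≤ f t)
    (hf_zero : ∀ t, h < t → f t = 0) (hf : Integrable f) (hf_prob : ∫ t, f t = 1) :
    r * (∫ t in Ioi r, f t) ≤ h := by
  have hnonneg : 0 ≤ ∫ t in Ioi r, f t :=
    setIntegral_nonneg measurableSet_Ioi fun t _ => hf_nonneg t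
  have hle : ∫ t in Ioi r, f t ≤ 1 :=
    hf_prob ▸ setIntegral_le_integral hf (ae_of_all _ hf_nonneg)
  rcases le_or_gt r h with hrh | hrh
  · nlinarith
  · rw [setIntegral_eq_zero_of_forall_eq_zero fun t (ht : t ∈ Ioi r) => hf_zero t (hrh.trans ht)]
    simpa using hh

/-- For a probability density `f` supported on `[l,h]` with `0 < l ≤ h < ∞`, with CDF `F`,
and `ψ t = 2∫_{t'≥t} f t'/t' dt' − (1/t)·∫_{t'≥t} f t' dt'`, for every `r > 0` one has
`−∫_{0<t≤r} t·ψ t dt ≤ r·(1 − F r) ≤ sup_{r'≥0} r'·(1 − F r')`. -/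
theorem neg_integral_t_psi_le_monopoly_rev
    (f : ℝ → ℝ) (l h : ℝ) (hl : 0 < l) (hlh : l ≤ h)
    (hf_nonneg : ∀ t, 0 ≤ f t)
    (hf_supp : Function.support f = Icc l h)
    (hf_int : Integrable f)
    (hf_prob : ∫ t, f t = 1)
    (ψ : ℝ → ℝ)
    (hψ : ∀ t : ℝ, 0 < t →
      ψ t = 2 * (∫ t' in Ici t, f t' / t') - (1 / t) * ∫ t' in Ici t, f t') :
    ∀ r : ℝ, 0 < r →
      -(∫ t in Ioc (0:ℝ) r, t * ψ t) ≤ r * (1 - ∫ t' in Iic r, f t') ∧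
      r * (1 - ∫ t' in Iic r, f t') ≤
        sSup {y : ℝ | ∃ r' : ℝ, 0 ≤ r' ∧ y = r' * (1 - ∫ t' in Iic r', f t')} := by
  intro r hr
  have hf_zero : ∀ t, t ∉ Icc l h → f t = 0 := fun t ht =>
    Function.notMem_support.mp (hf_supp ▸ ht)
  have hdiv : Integrable fun t => f t / t :=
    integrable_div_self hl hf_int fun t ht => hf_zero t fun hmem => ht.not_ge hmem.1
  refine ⟨?_, le_csSup ⟨h, ?_⟩ ⟨r, hr.le, rfl⟩⟩
  · have hker := integrable_virtualKernel (r := r) hf_int hdiv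
    have hψker : ∫ t in Ioc 0 r, t * ψ t = ∫ t in Ioc 0 r, ∫ s, virtualKernel f (t, s) := by
      refine setIntegral_congr_fun measurableSet_Ioc fun t ht => ?_
      have ht0 : t ≠ 0 := ht.1.ne'
      simp only [integral_virtualKernel_right hf_int hdiv, hψ t ht.1]
      field_simp
    rw [hψker, integral_integral_swap (f := fun t s => virtualKernel f (t, s)) hker,
      ← integral_neg, one_sub_setIntegral_Iic hf_int hf_prob, ← integral_const_mul,
      ← integral_indicator measurableSet_Ioi]
    exact integral_mono hker.integral_prod_right.neg
      ((hf_int.const_mul r).indicator measurableSet_Ioi)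
      (neg_integral_virtualKernel_left_le hr hf_nonneg fun t ht =>
        hf_zero t fun hmem => (hl.trans_le hmem.1).not_ge ht)
  · rintro _ ⟨r', -, rfl⟩
    rw [one_sub_setIntegral_Iic hf_int hf_prob]
    exact mul_setIntegral_Ioi_le (hl.le.trans hlh) hf_nonneg
      (fun t ht => hf_zero t fun hmem => ht.not_ge hmem.2) hf_int hf_prob
end

section
/- For all real numbers z ≥ e and all y ≥ 1, it holds that (ln y)·(z − y) ≤ z·(ln z − ln ln z + 1); consequently, for any H > 1, sup_{y ∈ [1,H]} (ln y / ln H)·(z − y) ≤ z·(ln z − ln ln z + 1)/ln H. -/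
/-- The pointwise bound `(ln y)·(z − y) ≤ z·(ln z − ln ln z + 1)` for `z ≥ e` and `y ≥ 1`. -/
theorem log_mul_sub_le {y z : ℝ} (hz : Real.exp 1 ≤ z) (hy : 1 ≤ y) :
    Real.log y * (z - y) ≤ z * (Real.log z - Real.log (Real.log z) + 1) := by
  have hz0 : 0 < z := (Real.exp_pos 1).trans_le hz
  have hL : 1 ≤ Real.log z := (Real.le_log_iff_exp_le hz0).2 hz
  set L := Real.log z with hLdef
  have hL0 : 0 < L := by linarith
  have hlogL : Real.log L ≤ L - 1 := Real.log_le_sub_one_of_pos hL0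
  rcases le_total z y with hzy | hyz
  · have hleft : Real.log y * (z - y) ≤ 0 :=
      mul_nonpos_of_nonneg_of_nonpos (Real.log_nonneg hy) (by linarith)
    have hright : 0 ≤ z * (L - Real.log L + 1) := mul_nonneg hz0.le (by linarith)
    linarith
  · -- Substitute `y = z * t / L` and use `log t ≤ t - 1`.
    obtain ⟨t, ht0, rfl⟩ : ∃ t : ℝ, 0 < t ∧ y = z * t / L :=
      ⟨y * L / z, by positivity, by field_simp⟩
    have hlog : Real.log (z * t / L) ≤ L + (t - 1) - Real.log L := by
      rw [Real.log_div (by positivity) hL0.ne', Real.log_mul hz0.ne' ht0.ne']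
      linarith [Real.log_le_sub_one_of_pos ht0]
    obtain ⟨s, hs0, hs⟩ : ∃ s : ℝ, 0 < s ∧ s ^ 2 = L :=
      ⟨√L, Real.sqrt_pos.2 hL0, Real.sq_sqrt hL0.le⟩
    have hlogs : Real.log L ≤ 2 * s - 2 := by
      rw [← hs, Real.log_pow]
      push_cast
      linarith [Real.log_le_sub_one_of_pos hs0]
    have hquad : 0 ≤ t ^ 2 - (1 + Real.log L) * t + 2 * L := by
      nlinarith [sq_nonneg (t - s), sq_nonneg s]
    have hgap : z * (L - Real.log L + 1) - (L + (t - 1) - Real.log L) * (z - z * t / L) =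
        z * (t ^ 2 - (1 + Real.log L) * t + 2 * L) / L := by
      field_simp
      ring
    have hgap_nonneg : 0 ≤ z * (t ^ 2 - (1 + Real.log L) * t + 2 * L) / L := by positivity
    have hmul := mul_le_mul_of_nonneg_right hlog (sub_nonneg.2 hyz)
    linarith

/-- For all reals `z ≥ e` and `y ≥ 1`, `(ln y)·(z − y) ≤ z·(ln z − ln ln z + 1)`;
consequently, for any `H > 1`,
`sup_{y ∈ [1,H]} (ln y / ln H)·(z − y) ≤ z·(ln z − ln ln z + 1)/ln H`. -/
theorem log_mul_sub_le_of_exp_le (z : ℝ) (hz : Real.exp 1 ≤ z) :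
    (∀ y : ℝ, 1 ≤ y →
      Real.log y * (z - y) ≤ z * (Real.log z - Real.log (Real.log z) + 1)) ∧
    (∀ H : ℝ, 1 < H →
      sSup ((fun y : ℝ => Real.log y / Real.log H * (z - y)) '' Set.Icc 1 H) ≤
        z * (Real.log z - Real.log (Real.log z) + 1) / Real.log H) := by
  refine ⟨fun y hy => log_mul_sub_le hz hy, fun H hH => ?_⟩
  refine csSup_le ((Set.nonempty_Icc.2 hH.le).image _) ?_
  rintro _ ⟨y, hy, rfl⟩
  have hlogH := Real.log_pos hH
  simp only [div_mul_eq_mul_div]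
  exact div_le_div_of_nonneg_right (log_mul_sub_le hz hy.1) hlogH.le
end
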